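/- Let K be an algebraically closed field of characteristic ≠ 2 and n ≥ 1. Every matrix A in the orthogonal monoid S_O(n,K) can be written as A = g·e·h where g, h ∈ GO_n(K) and e is a diagonal idempotent matrix (a diagonal matrix with every diagonal entry equal to 0 or 1) that also lies in S_O(n,K). -/

import Mathlib

open Matrix

/-- The matrix `J` of the standard symmetric bilinear form: `J i j = 1` if
`i + j = n + 1` (with 1-based indices), and `0` otherwise. -/
def Jorth (K : Type*) [Field K] (n : ℕ) : Matrix (Fin n) (Fin n) K :=
  Matrix.of fun i j => if (i : ℕ) + (j : ℕ) + 1 = n then 1 else 0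

theorem refl_aux {K V : Type*} [Field K] [AddCommGroup V] [Module K V]
    (B : LinearMap.BilinForm K V) (hs : ∀ x y, B x y = B y x) (v w : V)
    (hv : B v v = 0) (hw : B w w = 0) (hvw : B v w ≠ 0) :
    ∃ s : V →ₗ[K] V, (∀ x y, B (s x) (s y) = B x y) ∧ s v = w ∧
      ∀ x, B x v = 0 → B x w = 0 → s x = x := by
  refine ⟨LinearMap.id + (((B v w)⁻¹ • (B (v - w))).smulRight (v - w)), ?_, ?_, ?_⟩
  · intro x y
    have h1 := hs x v
    have h2 := hs x w
    have h3 := hs w v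
    simp [h1, h2, hv, hw, h3]
    field_simp
    ring
  · have h3 := hs w v
    simp [hv, h3, hvw]
  · intro x h h'
    simp [hs v x, hs w x, h, h']

theorem step_aux {K V : Type*} [Field K] [AddCommGroup V] [Module K V] (h2 : (2:K) ≠ 0)
    (B : LinearMap.BilinForm K V) (hs : ∀ x y, B x y = B y x) {ι : Type*} (c : ι → V) (v w : V)
    (hv : B v v = 0) (hw : B w w = 0) (hcv : ∀ i, B (c i) v = 0) (hcw : ∀ i, B (c i) w = 0)
    (xv : ∃ x, (∀ i, B (c i) x = 0) ∧ B x v ≠ 0) (xw : ∃ x, (∀ i, B (c i) x = 0) ∧ B x w ≠ 0) :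
    ∃ s : V →ₗ[K] V, (∀ x y, B (s x) (s y) = B x y) ∧ s v = w ∧
      ∀ i, s (c i) = c i := by
  by_cases hvw : B v w = 0
  · have : ∃ x, (∀ i, B (c i) x = 0) ∧ B x v ≠ 0 ∧ B x w ≠ 0 := by
      obtain ⟨x, hx, hxv⟩ := xv
      obtain ⟨y, hy, hyw⟩ := xw
      by_cases h : B x w = 0
      · by_cases h' : B y v = 0
        · exact ⟨x + y, by simp [hx, hy], by simp [h', hxv], by simp [h, hyw]⟩
        · exact ⟨y, hy, h', hyw⟩
      · exact ⟨x, hx, hxv, h⟩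
    obtain ⟨x, hx, hxv, hxw⟩ := this
    obtain ⟨u, hu, huv, huw, huu⟩ : ∃ u, (∀ i, B (c i) u = 0) ∧ B u v ≠ 0 ∧ B u w ≠ 0 ∧ B u u = 0 := by
      refine ⟨x + (-(B x x) / (2 * B x v)) • v, ?_, ?_, ?_, ?_⟩
      · simp [hx, hcv]
      · simp [hv, hxv]
      · simp [hvw, hxw]
      · simp [hv, hs v x]
        field_simp
        ring
    obtain ⟨s, h1, h3, h4⟩ := refl_aux B hs v u hv huu (by rwa [hs])
    obtain ⟨t, k1, k3, k4⟩ := refl_aux B hs u w huu hw huw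
    refine ⟨t ∘ₗ s, ?_, ?_, ?_⟩
    · simp [h1, k1]
    · simp [h3, k3]
    · intro i
      simp [h4 _ (hcv i) (hu i), k4 _ (hu i) (hcw i)]
  · obtain ⟨s, h1, h3, h4⟩ := refl_aux B hs v w hv hw hvw
    exact ⟨s, h1, h3, fun i => h4 _ (hcv i) (hcw i)⟩

theorem dual_aux {K V : Type*} [Field K] [AddCommGroup V] [Module K V] [FiniteDimensional K V]
    (B : LinearMap.BilinForm K V) (hn : B.Nondegenerate) (r : ℕ)
    (e : Fin (r+1) → V) (he : LinearIndependent K e) :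
    ∃ x, (∀ i : Fin r, B x (e i.castSucc) = 0) ∧ B x (e (Fin.last r)) ≠ 0 := by
  classical
  obtain ⟨f, hf⟩ : ∃ f : V →ₗ[K] K, ∀ i, f (e i) = if i = Fin.last r then 1 else 0 := by
    obtain ⟨f, hf⟩ := LinearMap.exists_extend ((Module.Basis.span he).constr K (fun i => if i = Fin.last r then (1:K) else 0))
    refine ⟨f, fun i => ?_⟩
    have := congrArg (fun g => g (Module.Basis.span he i)) hf
    simpa [Module.Basis.span_apply, Finsupp.single_apply] using this
  refine ⟨(B.toDual hn).symm f, fun i => ?_, ?_⟩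
  · rw [LinearMap.BilinForm.apply_toDual_symm_apply, hf]
    simp [Fin.castSucc_ne_last]
  · rw [LinearMap.BilinForm.apply_toDual_symm_apply, hf]
    simp

theorem witt_aux {K V : Type*} [Field K] [AddCommGroup V] [Module K V] [FiniteDimensional K V]
    (h2 : (2:K) ≠ 0)
    (B : LinearMap.BilinForm K V) (hs : ∀ x y, B x y = B y x) (hn : B.Nondegenerate) (r : ℕ)
    (e b : Fin r → V) (he : LinearIndependent K e) (hb : LinearIndependent K b)
    (hee : ∀ i j, B (e i) (e j) = 0) (hbb : ∀ i j, B (b i) (b j) = 0) :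
    ∃ g : V →ₗ[K] V, (∀ x y, B (g x) (g y) = B x y) ∧ ∀ i, g (e i) = b i := by
  induction r with
  | zero => exact ⟨LinearMap.id, by simp, fun i => i.elim0⟩
  | succ r ih =>
    obtain ⟨g, hg, hgi⟩ := ih (e ∘ Fin.castSucc) (b ∘ Fin.castSucc)
      (he.comp _ (Fin.castSucc_injective r)) (hb.comp _ (Fin.castSucc_injective r))
      (fun i j => hee _ _) (fun i j => hbb _ _)
    have ginj : LinearMap.ker g = ⊥ := by
      rw [LinearMap.ker_eq_bot']
      intro x hx
      apply hn.1
      intro y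
      rw [← hg, hx]; simp
    have hge : LinearIndependent K (g ∘ e) := he.map' g ginj
    simp only [Function.comp] at hgi
    obtain ⟨s, s1, s3, s4⟩ := step_aux h2 B hs (fun i : Fin r => b i.castSucc) (g (e (Fin.last r)))
      (b (Fin.last r)) (by rw [hg, hee]) (hbb _ _)
      (fun i => by rw [← hgi, hg, hee]) (fun i => hbb _ _)
      (by
        obtain ⟨x, hx, hx'⟩ := dual_aux B hn r _ hge
        exact ⟨x, fun i => by rw [hs, ← hgi]; exact hx i, hx'⟩)
      (by
        obtain ⟨x, hx, hx'⟩ := dual_aux B hn r _ hb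
        exact ⟨x, fun i => by rw [hs]; exact hx i, hx'⟩)
    refine ⟨s ∘ₗ g, by simp [s1, hg], fun i => ?_⟩
    refine Fin.lastCases ?_ (fun i => ?_) i
    · simp [s3]
    · simp [hgi, s4]

theorem J_symm (K : Type*) [Field K] (n : ℕ) : (Jorth K n)ᵀ = Jorth K n := by
  ext i j
  simp [Jorth, add_comm (i : ℕ)]

theorem J_sq (K : Type*) [Field K] (n : ℕ) : Jorth K n * Jorth K n = 1 := by
  ext i j
  have h : ∀ x y : Fin n, ((x : ℕ) + y + 1 = n) ↔ y = Fin.rev x := by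
    intro x y
    rw [Fin.ext_iff, Fin.val_rev]
    omega
  rw [Matrix.mul_apply, Finset.sum_eq_single i.rev]
  · simp [Jorth, h, Matrix.one_apply, eq_comm]
  · intro b _ hb
    simp [Jorth, h, hb]
  · simp

/-- first `r` columns of the identity -/
def Eaux (K : Type*) [Field K] (n r : ℕ) : Matrix (Fin n) (Fin r) K :=
  Matrix.of fun i k => if (i : ℕ) = (k : ℕ) then 1 else 0

theorem LI_aux {K : Type*} [Field K] {n r : ℕ} (P : Matrix (Fin n) (Fin r) K)
    (P' : Matrix (Fin r) (Fin n) K) (h : P' * P = 1) : LinearIndependent K P.col := by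
  rw [← Matrix.mulVec_injective_iff]
  intro x y hxy
  have := congrArg (fun z => P' *ᵥ z) hxy
  simpa [h] using this

theorem E_left {K : Type*} [Field K] {n r : ℕ} (hr : r ≤ n) :
    (Eaux K n r)ᵀ * Eaux K n r = 1 := by
  ext i j
  have h : ∀ (x : Fin n) (y : Fin r), ((x : ℕ) = y) ↔ x = Fin.castLE hr y := by
    intro x y
    rw [Fin.ext_iff, Fin.val_castLE]
  rw [Matrix.mul_apply, Finset.sum_eq_single (Fin.castLE hr i)]
  · simp [Eaux, Matrix.one_apply, Fin.ext_iff]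
  · intro b _ hb
    simp [Eaux, h, hb]
  · simp

theorem E_right {K : Type*} [Field K] {n r : ℕ} :
    Eaux K n r * (Eaux K n r)ᵀ = Matrix.diagonal (fun i : Fin n => if (i : ℕ) < r then 1 else 0) := by
  ext i j
  rw [Matrix.mul_apply, Matrix.diagonal_apply]
  by_cases hi : (i : ℕ) < r
  · rw [Finset.sum_eq_single ⟨i, hi⟩]
    · simp [Eaux, hi, Fin.ext_iff, eq_comm]
    · intro b _ hb
      have : (i : ℕ) ≠ b := fun h => hb (Fin.ext h.symm)
      simp [Eaux, this]
    · simp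
  · rw [Finset.sum_eq_zero]
    · simp [hi]
    · intro b _
      have : (i : ℕ) ≠ b := by omega
      simp [Eaux, this]

theorem E_iso {K : Type*} [Field K] {n r : ℕ} (hr : r + r ≤ n) :
    (Eaux K n r)ᵀ * Jorth K n * Eaux K n r = 0 := by
  ext i j
  rw [Matrix.mul_apply]
  apply Finset.sum_eq_zero
  intro x _
  rw [Matrix.mul_apply, Finset.sum_mul]
  apply Finset.sum_eq_zero
  intro y _
  simp only [Eaux, Jorth, Matrix.transpose_apply, Matrix.of_apply]
  split_ifs <;> simp
  omega

theorem frame_aux {K : Type*} [Field K] (h2 : (2 : K) ≠ 0) {n r : ℕ}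
    (P : Matrix (Fin n) (Fin r) K)
    (P' : Matrix (Fin r) (Fin n) K) (h : P' * P = 1) (hJ : Pᵀ * Jorth K n * P = 0) :
    r + r ≤ n ∧ ∃ g : Matrix (Fin n) (Fin n) K, gᵀ * Jorth K n * g = Jorth K n ∧
      g * Eaux K n r = P := by
  have hJu : (Jorth K n).det ≠ 0 := by
    intro h0
    have := congrArg Matrix.det (J_sq K n)
    rw [Matrix.det_mul, h0, Matrix.det_one] at this
    simp at this
  have hrank : P.rank = r := by
    rw [← Matrix.rank_transpose]
    have := LinearIndependent.rank_matrix (M := Pᵀ) (LI_aux P P' h)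
    simpa using this
  have hr : r + r ≤ n := by
    have := Matrix.rank_add_rank_le_card_of_mul_eq_zero hJ
    rwa [Matrix.rank_mul_eq_left_of_det_ne_zero _ _ hJu, Matrix.rank_transpose, hrank,
      Fintype.card_fin] at this
  refine ⟨hr, ?_⟩
  have key : ∀ x y, (Jorth K n).toBilin' x y = x ⬝ᵥ Jorth K n *ᵥ y :=
    fun x y => Matrix.toBilin'_apply' _ _ _
  have colB : ∀ (Q : Matrix (Fin n) (Fin r) K), Qᵀ * Jorth K n * Q = 0 → ∀ i j,
      (Jorth K n).toBilin' (Q.col i) (Q.col j) = 0 := by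
    intro Q hQ i j
    rw [key]
    have := congrFun (congrFun hQ i) j
    rw [Matrix.mul_assoc] at this
    exact this
  obtain ⟨g, hg, hgi⟩ := witt_aux h2 (Jorth K n).toBilin' (by
      intro x y
      rw [key, key, dotProduct_comm, ← Matrix.vecMul_transpose, J_symm,
        Matrix.dotProduct_mulVec])
    (LinearMap.BilinForm.nondegenerate_toBilin'_of_det_ne_zero' _ hJu) r
    (Eaux K n r).col P.col (LI_aux _ _ (E_left (by omega))) (LI_aux P P' h)
    (colB _ (E_iso hr)) (colB _ hJ)
  refine ⟨LinearMap.toMatrix' g, ?_, ?_⟩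
  · apply Matrix.toBilin'.injective
    rw [← LinearMap.toMatrix'_toLin' (LinearMap.toMatrix' g)]
    ext i j
    simp only [LinearMap.toMatrix'_toLin']
    have e1 : ∀ x, LinearMap.toMatrix' g *ᵥ x = g x := fun x => by
      rw [← Matrix.toLin'_apply, Matrix.toLin'_toMatrix']
    simp only [LinearMap.comp_apply]
    rw [← hg, Matrix.toBilin'_apply', key, ← Matrix.mulVec_mulVec, ← Matrix.mulVec_mulVec, e1,
      Matrix.dotProduct_mulVec, Matrix.vecMul_transpose, e1]
  · ext i k
    have := congrFun (hgi k) i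
    rw [← Matrix.toLin'_toMatrix' g, Matrix.toLin'_apply] at this
    exact this

theorem factor_aux {K : Type*} [Field K] {n : ℕ} (A : Matrix (Fin n) (Fin n) K) :
    ∃ (r : ℕ) (P : Matrix (Fin n) (Fin r) K) (P' : Matrix (Fin r) (Fin n) K)
      (Q : Matrix (Fin n) (Fin r) K) (Q' : Matrix (Fin r) (Fin n) K),
      P' * P = 1 ∧ Q' * Q = 1 ∧ A = P * Qᵀ := by
  obtain ⟨V, U, e, hV, hU, h⟩ := Matrix.exists_rank_normal_form A
  rw [Matrix.isUnit_iff_isUnit_det] at hV hU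
  let F : Matrix (Fin n) (Fin A.rank) K := of fun i k => if i = e.symm (Sum.inl k) then 1 else 0
  have hF : Fᵀ * F = 1 := by
    ext i j
    have h' : i = j ↔ j = i := eq_comm
    simp [F, Matrix.mul_apply, Matrix.one_apply, h']
  have hF' : F * Fᵀ = (fromBlocks 1 0 0 0 : Matrix _ _ K).submatrix e e := by
    ext i j
    obtain ⟨i, rfl⟩ := e.symm.surjective i
    obtain ⟨j, rfl⟩ := e.symm.surjective j
    rcases i with i | i <;> rcases j with j | j <;>
      simp [F, Matrix.mul_apply, Matrix.one_apply, eq_comm]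
  refine ⟨A.rank, V⁻¹ * F, Fᵀ * V, (Fᵀ * U⁻¹)ᵀ, (U * F)ᵀ, ?_, ?_, ?_⟩
  · rw [Matrix.mul_assoc, Matrix.mul_nonsing_inv_cancel_left _ _ hV, hF]
  · rw [← Matrix.transpose_mul, Matrix.mul_assoc, Matrix.nonsing_inv_mul_cancel_left _ _ hU, hF,
      Matrix.transpose_one]
  · rw [Matrix.transpose_transpose, Matrix.mul_assoc, ← Matrix.mul_assoc F, hF', ← h,
      Matrix.mul_assoc, Matrix.mul_assoc, Matrix.mul_nonsing_inv _ hU, Matrix.mul_one,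
      Matrix.nonsing_inv_mul_cancel_left _ _ hV]

/-- over an algebraically closed field of characteristic `≠ 2`,
every matrix `A` in the orthogonal monoid `S_O(n,K)` can be written
`A = g * e * h` with `g, h ∈ GOₙ(K)` and `e` a diagonal idempotent (all
diagonal entries `0` or `1`) which also lies in `S_O(n,K)`. -/
theorem orthogonal_monoid_orbit_decomposition (K : Type*) [Field K]
    [IsAlgClosed K] (h2 : (2 : K) ≠ 0) (n : ℕ) (hn : 1 ≤ n)
    (A : Matrix (Fin n) (Fin n) K)
    (hA : ∃ c : K, Aᵀ * Jorth K n * A = c • Jorth K n ∧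
        A * Jorth K n * Aᵀ = c • Jorth K n) :
    ∃ g h e : Matrix (Fin n) (Fin n) K,
      (∃ c : K, c ≠ 0 ∧ gᵀ * Jorth K n * g = c • Jorth K n) ∧
      (∃ c : K, c ≠ 0 ∧ hᵀ * Jorth K n * h = c • Jorth K n) ∧
      (∃ d : Fin n → K, e = Matrix.diagonal d ∧ ∀ i, d i = 0 ∨ d i = 1) ∧
      (∃ c : K, eᵀ * Jorth K n * e = c • Jorth K n ∧
          e * Jorth K n * eᵀ = c • Jorth K n) ∧
      A = g * e * h := by
  obtain ⟨c, hc1, hc2⟩ := hA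
  by_cases hc : c = 0
  · subst hc
    rw [zero_smul] at hc1 hc2
    obtain ⟨r, P, P', Q, Q', hP, hQ, rfl⟩ := factor_aux A
    have hPt : Pᵀ * P'ᵀ = 1 := by rw [← Matrix.transpose_mul, hP, Matrix.transpose_one]
    have hQt : Qᵀ * Q'ᵀ = 1 := by rw [← Matrix.transpose_mul, hQ, Matrix.transpose_one]
    have hJP : Pᵀ * Jorth K n * P = 0 := by
      have : Q' * ((P * Qᵀ)ᵀ * Jorth K n * (P * Qᵀ)) * Q'ᵀ = (Q' * Q) * (Pᵀ * Jorth K n * P) * (Qᵀ * Q'ᵀ) := by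
        simp only [Matrix.transpose_mul, Matrix.transpose_transpose, Matrix.mul_assoc]
      rw [hc1, hQ, hQt] at this
      simpa using this.symm
    have hJQ : Qᵀ * Jorth K n * Q = 0 := by
      have : P' * ((P * Qᵀ) * Jorth K n * (P * Qᵀ)ᵀ) * P'ᵀ = (P' * P) * (Qᵀ * Jorth K n * Q) * (Pᵀ * P'ᵀ) := by
        simp only [Matrix.transpose_mul, Matrix.transpose_transpose, Matrix.mul_assoc]
      rw [hc2, hP, hPt] at this
      simpa using this.symm
    obtain ⟨hr, g, hg, hgE⟩ := frame_aux h2 P P' hP hJP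
    obtain ⟨-, h, hh, hhE⟩ := frame_aux h2 Q Q' hQ hJQ
    have hee : ∀ X Y : Matrix (Fin n) (Fin r) K,
        (X * (Eaux K n r)ᵀ) * Jorth K n * (Eaux K n r * Yᵀ) = 0 := by
      intro X Y
      have : (X * (Eaux K n r)ᵀ) * Jorth K n * (Eaux K n r * Yᵀ)
          = X * ((Eaux K n r)ᵀ * Jorth K n * Eaux K n r) * Yᵀ := by
        simp only [Matrix.mul_assoc]
      rw [this, E_iso hr]; simp
    refine ⟨g, hᵀ, Eaux K n r * (Eaux K n r)ᵀ, ⟨1, one_ne_zero, by rw [hg, one_smul]⟩,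
      ⟨1, one_ne_zero, ?_⟩, ⟨_, E_right, fun i => ?_⟩, ⟨0, ?_, ?_⟩, ?_⟩
    · -- J hᵀ J h = 1, hence h J hᵀ J = 1
      rw [Matrix.transpose_transpose, one_smul]
      have h1 : (Jorth K n * hᵀ * Jorth K n) * h = 1 := by
        rw [Matrix.mul_assoc, Matrix.mul_assoc, ← Matrix.mul_assoc hᵀ, hh, J_sq]
      have h3 := mul_eq_one_comm.mp h1
      calc h * Jorth K n * hᵀ = h * Jorth K n * hᵀ * (Jorth K n * Jorth K n) := by
            rw [J_sq, Matrix.mul_one]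
        _ = (h * (Jorth K n * hᵀ * Jorth K n)) * Jorth K n := by
            simp only [Matrix.mul_assoc]
        _ = Jorth K n := by rw [h3, Matrix.one_mul]
    · by_cases hi : (i : ℕ) < r <;> simp [hi]
    · rw [Matrix.transpose_mul, Matrix.transpose_transpose, zero_smul]
      exact hee _ _
    · rw [Matrix.transpose_mul, Matrix.transpose_transpose, zero_smul]
      exact hee _ _
    · rw [← hgE, ← hhE, Matrix.transpose_mul]
      simp only [Matrix.mul_assoc]
  · refine ⟨A, 1, 1, ⟨c, hc, hc1⟩, ⟨1, one_ne_zero, by simp⟩,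
      ⟨fun _ => 1, by simp, fun i => Or.inr rfl⟩, ⟨1, by simp, by simp⟩, by simp⟩
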